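/- arXiv:1203.4317 — 2 statements merged into one kernel-verified Lean document; each statement's English description precedes it below -/
import Mathlib

section
/- Let A = ℚ[t₁, t₂] ⊗ Λ(w₁,…,w₆) with deg w₁ = deg w₂ = deg w₃ = deg w₄ = 3, deg w₅ = 7 and deg w₆ = 9, and let D be the unique derivation of degree +1 on A with D t₁ = D t₂ = 0, D w₁ = D w₂ = D w₃ = D w₄ = 0, D w₅ = w₁w₃t₂ + t₂⁴ and D w₆ = w₁w₄t₂² + w₂w₃t₁t₂ + t₁⁵. Then D ∘ D = 0 and dim_ℚ H(A, D) < ∞. -/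
/-!
`H(A, D)` is finite-dimensional because each polynomial generator acts nilpotently on it.

The algebra `A` is a finite module over the noetherian ring `R = ℚ[t₁, t₂]`, and `D` is `R`-linear
since `D` kills `t₁` and `t₂` (`D_smul`). Hence `ker D` is a finitely generated `R`-module.
If `c` is a cocycle which preserves cocycles under left multiplication, then
`D (w₅ c z) = (D w₅) c z` for each cocycle `z`, so `(D w₅) c` acts as zero on cohomology.

* With `n = w₁ w₃ t₂`, `n² = 0`, one has `(n + t₂⁴) (t₂⁴ - n) = t₂⁸`, so `t₂⁸` acts as zero.
* With `m = w₁ w₄ t₂² + w₂ w₃ t₁ t₂`, `m³ = 0`, one has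
  `(m + t₁⁵) (t₁¹⁰ - t₁⁵ m + m²) = t₁¹⁵`, so `t₁¹⁵` acts as zero.

Modulo coboundaries, `ker D` is therefore spanned over `ℚ` by the finitely many elements
`t₁ⁱ t₂ʲ k` with `i < 15`, `j < 8` and `k` in a finite set of `R`-generators of `ker D`
(`span_aux`).

For `D ∘ D = 0`: the signs in the graded Leibniz rule, together with the fact that `D` changes the
parity of the degree, make `D ∘ D` commute with left multiplication by each generator as soon as
`D ∘ D` kills that generator (`DD_gen`); so `D ∘ D` vanishes on everything once `D (D wⱼ) = 0`.
-/

/- D w₅ = w₁w₃t₂ + t₂⁴, D w₆ = w₁w₄t₂² + w₂w₃t₁t₂ + t₁⁵ on ℚ[t₁,t₂] ⊗ Λ(w₁,…,w₆), deg w = (3,3,3,3,7,9). -/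

open scoped TensorProduct

set_option synthInstance.maxHeartbeats 1000000
set_option maxHeartbeats 1000000

noncomputable section

/-- The free graded-commutative ℚ-algebra `ℚ[t₁,…,t_r] ⊗ Λ(v₁,…,v_n)`:
the tensor product of a polynomial algebra on `r` generators of degree 2 with
an exterior algebra on `n` generators of odd degrees. -/
abbrev FGCA (r n : ℕ) : Type :=
  MvPolynomial (Fin r) ℚ ⊗[ℚ] ExteriorAlgebra ℚ (Fin n → ℚ)

/-- The degree-2 polynomial generators `tᵢ`. -/
def tg (r n : ℕ) (i : Fin r) : FGCA r n := (MvPolynomial.X i) ⊗ₜ 1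

/-- The odd-degree exterior generators `vⱼ`. -/
def vg (r n : ℕ) (j : Fin n) : FGCA r n :=
  1 ⊗ₜ (ExteriorAlgebra.ι ℚ (Pi.single j (1 : ℚ)))

/-- The monomial `t^α · v_S` (with the exterior factors multiplied in increasing
order of index).  These monomials form a ℚ-basis of `FGCA r n`. -/
def gmon (r n : ℕ) (α : Fin r →₀ ℕ) (S : Finset (Fin n)) : FGCA r n :=
  (MvPolynomial.monomial α (1 : ℚ)) ⊗ₜ
    ((S.sort (· ≤ ·)).map fun j => ExteriorAlgebra.ι ℚ (Pi.single j (1 : ℚ))).prod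

/-- The (cohomological) degree of the monomial `t^α · v_S`, where each `tᵢ` has
degree `2` and each `vⱼ` has degree `dv j`. -/
def gdeg (r n : ℕ) (dv : Fin n → ℕ) (α : Fin r →₀ ℕ) (S : Finset (Fin n)) : ℕ :=
  (α.sum fun _ k => 2 * k) + S.sum dv

/-- The homogeneous part of degree `k` of `FGCA r n`: the span of the monomials
of degree `k`. -/
def homog (r n : ℕ) (dv : Fin n → ℕ) (k : ℕ) : Submodule ℚ (FGCA r n) :=
  Submodule.span ℚ { a | ∃ α S, gdeg r n dv α S = k ∧ a = gmon r n α S }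

/-- The graded Leibniz rule for a degree `+1` derivation `D`:
`D(ab) = D(a)·b + (−1)^(deg a) a·D(b)` for homogeneous `a`. -/
def IsLeibniz (r n : ℕ) (dv : Fin n → ℕ) (D : FGCA r n →ₗ[ℚ] FGCA r n) : Prop :=
  ∀ (p : ℕ) (a b : FGCA r n), a ∈ homog r n dv p →
    D (a * b) = D a * b + ((-1 : ℚ) ^ p) • (a * D b)

/-- `D` raises (cohomological) degree by `1`. -/
def RaisesDegByOne (r n : ℕ) (dv : Fin n → ℕ) (D : FGCA r n →ₗ[ℚ] FGCA r n) : Prop :=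
  ∀ (k : ℕ), ∀ a ∈ homog r n dv k, D a ∈ homog r n dv (k + 1)

/-- The cohomology `H(A, D) = ker D / im D` as a ℚ-vector space, realized as the
image of `ker D` in `A ⧸ im D`. -/
abbrev Cohomology (r n : ℕ) (D : FGCA r n →ₗ[ℚ] FGCA r n) : Type :=
  (LinearMap.ker D).map (LinearMap.range D).mkQ

end

noncomputable section

local notation "dv" => (![3, 3, 3, 3, 7, 9] : Fin 6 → ℕ)
local notation "t₁" => tg 2 6 0
local notation "t₂" => tg 2 6 1
local notation "w₁" => vg 2 6 0
local notation "w₂" => vg 2 6 1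
local notation "w₃" => vg 2 6 2
local notation "w₄" => vg 2 6 3
local notation "w₅" => vg 2 6 4
local notation "w₆" => vg 2 6 5

/-! ### Generators and commutation -/

lemma tg_eq (i : Fin 2) : tg 2 6 i = algebraMap (MvPolynomial (Fin 2) ℚ) (FGCA 2 6)
    (MvPolynomial.X i) := rfl

lemma tg_mul (i : Fin 2) (a : FGCA 2 6) :
    tg 2 6 i * a = (MvPolynomial.X i : MvPolynomial (Fin 2) ℚ) • a := by
  rw [tg_eq]; exact (Algebra.smul_def _ a).symm

lemma tg_comm (i : Fin 2) (a : FGCA 2 6) : Commute (tg 2 6 i) a := by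
  rw [tg_eq]; exact Algebra.commutes _ a

lemma tg_pow_mul (i : Fin 2) (k : ℕ) (a : FGCA 2 6) :
    tg 2 6 i ^ k * a = (MvPolynomial.X i ^ k : MvPolynomial (Fin 2) ℚ) • a := by
  rw [tg_eq, ← map_pow]; exact (Algebra.smul_def _ a).symm

lemma fgca_mul_neg (a b : FGCA 2 6) : a * -b = -(a * b) := mul_neg a b

lemma fgca_neg_mul (a b : FGCA 2 6) : -a * b = -(a * b) := neg_mul a b

lemma vg_sq (j : Fin 6) : vg 2 6 j * vg 2 6 j = 0 := by
  simp [vg, Algebra.TensorProduct.tmul_mul_tmul]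

lemma vg_anti (i j : Fin 6) : vg 2 6 i * vg 2 6 j = - (vg 2 6 j * vg 2 6 i) := by
  rw [eq_neg_iff_add_eq_zero]
  simp only [vg, Algebra.TensorProduct.tmul_mul_tmul, ← TensorProduct.tmul_add,
    ExteriorAlgebra.ι_add_mul_swap, TensorProduct.tmul_zero]

lemma pair_comm (i j k l : Fin 6) :
    Commute (vg 2 6 i * vg 2 6 j) (vg 2 6 k * vg 2 6 l) := by
  have h : ∀ k, Commute (vg 2 6 i * vg 2 6 j) (vg 2 6 k) := by
    intro k
    change vg 2 6 i * vg 2 6 j * vg 2 6 k = vg 2 6 k * (vg 2 6 i * vg 2 6 j)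
    rw [mul_assoc, vg_anti j k, fgca_mul_neg, ← mul_assoc, vg_anti i k, fgca_neg_mul, neg_neg, mul_assoc]
  exact (h k).mul_right (h l)

lemma pair_sq (i j : Fin 6) : (vg 2 6 i * vg 2 6 j) * (vg 2 6 i * vg 2 6 j) = 0 := by
  rw [mul_assoc, ← mul_assoc (vg 2 6 j), vg_anti j i, fgca_neg_mul, fgca_mul_neg, mul_assoc, vg_sq,
    mul_zero, mul_zero, neg_zero]

/-- `gmon 0 {j} = vⱼ`, so `vⱼ` is homogeneous of its own degree. -/
lemma vg_mem (d : Fin 6 → ℕ) (j : Fin 6) : vg 2 6 j ∈ homog 2 6 d (d j) := by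
  refine Submodule.subset_span ⟨0, {j}, ?_, ?_⟩
  · simp [gdeg]
  · simp [gmon, vg]

lemma tg_mem (d : Fin 6 → ℕ) (i : Fin 2) : tg 2 6 i ∈ homog 2 6 d 2 := by
  refine Submodule.subset_span ⟨Finsupp.single i 1, ∅, ?_, ?_⟩
  · simp [gdeg]
  · simp [gmon, tg, MvPolynomial.X]

lemma dv_odd (j : Fin 6) : Odd (dv j) := by
  fin_cases j <;> decide

instance finite_FGCA : Module.Finite (MvPolynomial (Fin 2) ℚ) (FGCA 2 6) := by
  have : Module.Finite ℚ (ExteriorAlgebra ℚ (Fin 6 → ℚ)) :=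
    Module.Finite.of_basis (Pi.basisFun ℚ (Fin 6)).ExteriorAlgebra
  infer_instance

/-! ### Consequences of the Leibniz rule -/

lemma D_vg_mul {D : FGCA 2 6 →ₗ[ℚ] FGCA 2 6} (hLeib : IsLeibniz 2 6 dv D) (j : Fin 6)
    (a : FGCA 2 6) : D (vg 2 6 j * a) = D (vg 2 6 j) * a - vg 2 6 j * D a := by
  rw [hLeib _ _ a (vg_mem dv j), (dv_odd j).neg_one_pow, sub_eq_add_neg]
  exact congrArg _ (neg_one_smul ℚ (vg 2 6 j * D a))

lemma D_smul {D : FGCA 2 6 →ₗ[ℚ] FGCA 2 6} (hLeib : IsLeibniz 2 6 dv D)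
    (h0 : ∀ i, D (tg 2 6 i) = 0) (r : MvPolynomial (Fin 2) ℚ) :
    ∀ a : FGCA 2 6, D (r • a) = r • D a := by
  induction r using MvPolynomial.induction_on with
  | C c =>
    intro a
    have h : ∀ b : FGCA 2 6, (MvPolynomial.C c : MvPolynomial (Fin 2) ℚ) • b = c • b := fun b => by
      rw [← MvPolynomial.algebraMap_eq, algebraMap_smul]
    rw [h, h, map_smul]
  | add p q hp hq => intro a; rw [add_smul, map_add, hp, hq, add_smul]
  | mul_X p i hp =>
    intro a
    rw [mul_smul, hp, mul_smul, ← tg_mul, ← tg_mul, hLeib 2 _ a (tg_mem dv i), h0]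
    simp

/-- If `D ∘ D` kills `vⱼ`, then `D ∘ D` commutes with left multiplication by `vⱼ`: the two mixed
terms `D vⱼ * D a` cancel because `vⱼ` is odd and `D vⱼ` is even. -/
lemma DD_gen {D : FGCA 2 6 →ₗ[ℚ] FGCA 2 6} (hLeib : IsLeibniz 2 6 dv D)
    (hdeg : RaisesDegByOne 2 6 dv D) (j : Fin 6) (hj : D (D (vg 2 6 j)) = 0) (a : FGCA 2 6) :
    D (D (vg 2 6 j * a)) = vg 2 6 j * D (D a) := by
  rw [D_vg_mul hLeib, map_sub, D_vg_mul hLeib,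
    hLeib _ _ a (hdeg _ _ (vg_mem dv j)), hj, (dv_odd j).add_one.neg_one_pow]
  simp

lemma D_one {D : FGCA 2 6 →ₗ[ℚ] FGCA 2 6} (hLeib : IsLeibniz 2 6 dv D) : D 1 = 0 := by
  have h1 : (1 : FGCA 2 6) ∈ homog 2 6 dv 0 :=
    Submodule.subset_span ⟨0, ∅, by simp [gdeg], by
      simp [gmon, Algebra.TensorProduct.one_def]⟩
  have h := hLeib 0 1 1 h1
  simpa using h

/-- If `D` kills the `tᵢ` and `D ∘ D` kills the `vⱼ`, then `D ∘ D = 0`: by `DD_gen` and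
`R`-linearity, `D ∘ D` commutes with all left multiplications, and `D 1 = 0`. -/
lemma DD_zero {D : FGCA 2 6 →ₗ[ℚ] FGCA 2 6} (hLeib : IsLeibniz 2 6 dv D)
    (hdeg : RaisesDegByOne 2 6 dv D) (h0 : ∀ i, D (tg 2 6 i) = 0)
    (hv : ∀ j, D (D (vg 2 6 j)) = 0) (a : FGCA 2 6) : D (D a) = 0 := by
  have key : ∀ (e : ExteriorAlgebra ℚ (Fin 6 → ℚ)) (a : FGCA 2 6),
      D (D (((1 : MvPolynomial (Fin 2) ℚ) ⊗ₜ[ℚ] e) * a)) = (1 ⊗ₜ[ℚ] e) * D (D a) := by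
    intro e
    induction e using ExteriorAlgebra.induction with
    | algebraMap r =>
      intro a
      have h : ∀ b : FGCA 2 6, ((1 : MvPolynomial (Fin 2) ℚ) ⊗ₜ[ℚ]
          (algebraMap ℚ (ExteriorAlgebra ℚ (Fin 6 → ℚ)) r)) * b = r • b := fun b => by
        rw [Algebra.algebraMap_eq_smul_one, TensorProduct.tmul_smul,
          ← Algebra.TensorProduct.one_def, smul_mul_assoc, one_mul]
      rw [h, h, map_smul, map_smul]
    | ι x =>
      intro a
      have hx : (1 : MvPolynomial (Fin 2) ℚ) ⊗ₜ[ℚ] (ExteriorAlgebra.ι ℚ x)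
          = ∑ j, x j • vg 2 6 j := by
        conv_lhs => rw [pi_eq_sum_univ' x]
        simp only [map_sum, map_smul, TensorProduct.tmul_sum, TensorProduct.tmul_smul, vg]
      rw [hx]
      simp only [Finset.sum_mul, map_sum, smul_mul_assoc, map_smul]
      exact Finset.sum_congr rfl fun j _ => by rw [DD_gen hLeib hdeg j (hv j)]
    | mul e f he hf =>
      intro a
      have h : (1 : MvPolynomial (Fin 2) ℚ) ⊗ₜ[ℚ] (e * f) = (1 ⊗ₜ[ℚ] e) * (1 ⊗ₜ[ℚ] f) := by
        rw [Algebra.TensorProduct.tmul_mul_tmul, one_mul]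
      rw [h, mul_assoc, he, hf, mul_assoc]
    | add e f he hf =>
      intro a
      rw [TensorProduct.tmul_add, add_mul, map_add, map_add, he, hf, add_mul]
  induction a using TensorProduct.induction_on with
  | zero => simp
  | add x y hx hy => rw [map_add, map_add, hx, hy, add_zero]
  | tmul r e =>
    have h : r ⊗ₜ[ℚ] e = r • ((1 : MvPolynomial (Fin 2) ℚ) ⊗ₜ[ℚ] e * (1 : FGCA 2 6)) := by
      rw [mul_one, TensorProduct.smul_tmul', smul_eq_mul, mul_one]
    rw [h, D_smul hLeib h0, D_smul hLeib h0, key, D_one hLeib, map_zero, mul_zero, smul_zero]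

/-! ### Nilpotence of `t₁` and `t₂` on cohomology -/

lemma t2_identity :
    (w₁ * w₃ * t₂ + t₂ ^ 4) * (t₂ ^ 4 - w₁ * w₃ * t₂) = t₂ ^ 8 := by
  have hn : (w₁ * w₃ * t₂) * (w₁ * w₃ * t₂) = 0 := by
    rw [mul_assoc, (tg_comm 1 (w₁ * w₃ * t₂)).eq, ← mul_assoc, ← mul_assoc, pair_sq,
      zero_mul, zero_mul]
  have hc : t₂ ^ 4 * (w₁ * w₃ * t₂) = w₁ * w₃ * t₂ * t₂ ^ 4 :=
    ((tg_comm 1 (w₁ * w₃ * t₂)).pow_left 4).eq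
  generalize w₁ * w₃ * t₂ = n at *
  rw [add_mul, mul_sub, mul_sub, hn, hc, ← pow_add]
  abel

lemma t1_identity :
    (w₁ * w₄ * t₂ ^ 2 + w₂ * w₃ * t₁ * t₂ + t₁ ^ 5) *
      (t₁ ^ 10 - t₁ ^ 5 * (w₁ * w₄ * t₂ ^ 2 + w₂ * w₃ * t₁ * t₂) +
        (w₁ * w₄ * t₂ ^ 2 + w₂ * w₃ * t₁ * t₂) ^ 2) = t₁ ^ 15 := by
  have ht (k : ℕ) (a : FGCA 2 6) : Commute (t₂ ^ k) a := (tg_comm 1 a).pow_left k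
  have hP : (w₁ * w₄ * t₂ ^ 2) ^ 2 = 0 := by
    rw [(ht 2 (w₁ * w₄)).symm.mul_pow, sq (w₁ * w₄), pair_sq, zero_mul]
  have hQ : (w₂ * w₃ * t₁ * t₂) ^ 2 = 0 := by
    rw [mul_assoc, (((tg_comm 0 _).mul_left (tg_comm 1 _)).symm).mul_pow, sq (w₂ * w₃), pair_sq,
      zero_mul]
  have hPQ : Commute (w₁ * w₄ * t₂ ^ 2) (w₂ * w₃ * t₁ * t₂) := by
    refine Commute.mul_left ?_ (ht 2 _)
    exact ((pair_comm _ _ _ _).mul_right (tg_comm 0 _).symm).mul_right (tg_comm 1 _).symm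
  have hm : (w₁ * w₄ * t₂ ^ 2 + w₂ * w₃ * t₁ * t₂) ^ 3 = 0 := by
    generalize w₁ * w₄ * t₂ ^ 2 = P at *
    generalize w₂ * w₃ * t₁ * t₂ = Q at *
    have h1 : (P + Q) ^ 2 = 2 • (P * Q) := by
      rw [hPQ.add_sq, hP, hQ, zero_add, add_zero, mul_assoc, two_mul, two_smul]
    have h2 : P * Q * P = 0 := by rw [mul_assoc, ← hPQ.eq, ← mul_assoc, ← sq, hP, zero_mul]
    have h3 : P * Q * Q = 0 := by rw [mul_assoc, ← sq, hQ, mul_zero]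
    rw [pow_succ, h1, smul_mul_assoc, mul_add, h2, h3, add_zero, smul_zero]
  have hc : Commute (t₁ ^ 5) (w₁ * w₄ * t₂ ^ 2 + w₂ * w₃ * t₁ * t₂) :=
    (tg_comm 0 _).pow_left 5
  generalize w₁ * w₄ * t₂ ^ 2 + w₂ * w₃ * t₁ * t₂ = m at *
  have hx : t₁ ^ 10 = (t₁ ^ 5) ^ 2 := by rw [← pow_mul]
  have hx' : t₁ ^ 15 = (t₁ ^ 5) ^ 3 := by rw [← pow_mul]
  rw [hx, hx']
  generalize t₁ ^ 5 = x at *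
  have hcm : m * x = x * m := hc.eq.symm
  have e1 : m * (x * m) = x * m ^ 2 := by rw [← mul_assoc, hcm, mul_assoc, sq]
  have e2 : m * x ^ 2 = x ^ 2 * m := (hc.pow_left 2).eq.symm
  have e3 : m * m ^ 2 = 0 := by rw [← pow_succ', hm]
  have e4 : x * x ^ 2 = x ^ 3 := by rw [← pow_succ']
  have e5 : x * (x * m) = x ^ 2 * m := by rw [← mul_assoc, sq]
  rw [add_mul, mul_add, mul_sub, mul_add, mul_sub, e1, e2, e3, e4, e5]
  abel

/-! ### Finite generation modulo coboundaries -/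

/-- Let `z` generate the `R`-module `R • z`, where `R = ℚ[X₀, X₁]`. If the subspace `B` contains
all multiples of `X₀¹⁵ • z` and `X₁⁸ • z`, then modulo `B` the module `R • z` is spanned over `ℚ`
by the `X₀ⁱ X₁ʲ • z` with `i < 15` and `j < 8`. -/
lemma span_aux (B P : Submodule ℚ (FGCA 2 6)) (hBP : B ≤ P) (z : FGCA 2 6)
    (h0 : ∀ r : MvPolynomial (Fin 2) ℚ,
      r • (MvPolynomial.X 0 ^ 15 : MvPolynomial (Fin 2) ℚ) • z ∈ B)
    (h1 : ∀ r : MvPolynomial (Fin 2) ℚ,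
      r • (MvPolynomial.X 1 ^ 8 : MvPolynomial (Fin 2) ℚ) • z ∈ B)
    (hP : ∀ i < 15, ∀ j < 8,
      (MvPolynomial.X 0 ^ i * MvPolynomial.X 1 ^ j : MvPolynomial (Fin 2) ℚ) • z ∈ P)
    (r : MvPolynomial (Fin 2) ℚ) : r • z ∈ P := by
  induction r using MvPolynomial.induction_on' with
  | add p q hp hq => rw [add_smul]; exact P.add_mem hp hq
  | monomial α c =>
    have hmon : MvPolynomial.monomial α c
        = c • (MvPolynomial.X 0 ^ α 0 * MvPolynomial.X 1 ^ α 1 : MvPolynomial (Fin 2) ℚ) := by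
      rw [MvPolynomial.monomial_eq, Finsupp.prod_fintype _ _ (fun _ => pow_zero _),
        Fin.prod_univ_two, MvPolynomial.smul_eq_C_mul]
    rw [hmon, smul_assoc]
    refine P.smul_mem c ?_
    by_cases hi : α 0 < 15
    · by_cases hj : α 1 < 8
      · exact hP _ hi _ hj
      · obtain ⟨k, hk⟩ := Nat.exists_eq_add_of_le (not_lt.mp hj)
        have := hBP (h1 (MvPolynomial.X 0 ^ α 0 * MvPolynomial.X 1 ^ k))
        rw [← mul_smul] at this
        convert this using 2
        rw [hk]; ring
    · obtain ⟨k, hk⟩ := Nat.exists_eq_add_of_le (not_lt.mp hi)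
      have := hBP (h0 (MvPolynomial.X 0 ^ k * MvPolynomial.X 1 ^ α 1))
      rw [← mul_smul] at this
      convert this using 2
      rw [hk]; ring

/-- If `D` is linear over `R = ℚ[X₀, X₁]` and `X₀¹⁵`, `X₁⁸` send cocycles to coboundaries, then the
cohomology is finite-dimensional. -/
lemma finite_cohomology {D : FGCA 2 6 →ₗ[ℚ] FGCA 2 6}
    (hlin : ∀ (r : MvPolynomial (Fin 2) ℚ) (a : FGCA 2 6), D (r • a) = r • D a)
    (h0 : ∀ z, D z = 0 → (MvPolynomial.X 0 ^ 15 : MvPolynomial (Fin 2) ℚ) • z ∈ LinearMap.range D)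
    (h1 : ∀ z, D z = 0 → (MvPolynomial.X 1 ^ 8 : MvPolynomial (Fin 2) ℚ) • z ∈ LinearMap.range D) :
    FiniteDimensional ℚ (Cohomology 2 6 D) := by
  let D' : FGCA 2 6 →ₗ[MvPolynomial (Fin 2) ℚ] FGCA 2 6 :=
    { toFun := D, map_add' := map_add D, map_smul' := hlin }
  obtain ⟨S, hS⟩ := IsNoetherian.noetherian (LinearMap.ker D')
  have hSD : ∀ k ∈ S, D k = 0 := fun k hk => by
    have : k ∈ LinearMap.ker D' := hS ▸ Submodule.subset_span hk
    exact this
  have hrange : ∀ (r : MvPolynomial (Fin 2) ℚ), ∀ b ∈ LinearMap.range D,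
      r • b ∈ LinearMap.range D := by
    rintro r _ ⟨a, rfl⟩
    exact ⟨r • a, hlin r a⟩
  let f : FGCA 2 6 × ℕ × ℕ → FGCA 2 6 := fun x =>
    (MvPolynomial.X 0 ^ x.2.1 * MvPolynomial.X 1 ^ x.2.2 : MvPolynomial (Fin 2) ℚ) • x.1
  let F : Set (FGCA 2 6) := f '' ((S : Set _) ×ˢ Set.Iio 15 ×ˢ Set.Iio 8)
  have hF : F.Finite :=
    (S.finite_toSet.prod ((Set.finite_Iio 15).prod (Set.finite_Iio 8))).image f
  have hle : LinearMap.ker D ≤ Submodule.span ℚ F ⊔ LinearMap.range D := by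
    intro z hz
    have hz' : z ∈ Submodule.span (MvPolynomial (Fin 2) ℚ) (S : Set (FGCA 2 6)) := by
      rw [hS]; exact hz
    obtain ⟨c, -, rfl⟩ := Submodule.mem_span_finset.mp hz'
    refine Submodule.sum_mem _ fun k hk => ?_
    refine span_aux (LinearMap.range D) _ le_sup_right k (fun r => hrange r _ (h0 k (hSD k hk)))
      (fun r => hrange r _ (h1 k (hSD k hk))) (fun i hi j hj => ?_) (c k)
    exact Submodule.mem_sup_left (Submodule.subset_span ⟨(k, i, j), ⟨hk, hi, hj⟩, rfl⟩)
  have hmap : (LinearMap.ker D).map (LinearMap.range D).mkQ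
      ≤ (Submodule.span ℚ F).map (LinearMap.range D).mkQ := by
    refine (Submodule.map_mono hle).trans ?_
    rw [Submodule.map_sup, Submodule.mkQ_map_self, sup_bot_eq]
  have : FiniteDimensional ℚ (Submodule.span ℚ F) := FiniteDimensional.span_of_finite ℚ hF
  exact Submodule.finiteDimensional_of_le hmap

theorem stmt_16 (D : FGCA 2 6 →ₗ[ℚ] FGCA 2 6)
    (hLeib : IsLeibniz 2 6 dv D)
    (hdeg : RaisesDegByOne 2 6 dv D)
    (hD0 : D t₁ = (0 : FGCA 2 6))
    (hD1 : D t₂ = (0 : FGCA 2 6))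
    (hD2 : D w₁ = (0 : FGCA 2 6))
    (hD3 : D w₂ = (0 : FGCA 2 6))
    (hD4 : D w₃ = (0 : FGCA 2 6))
    (hD5 : D w₄ = (0 : FGCA 2 6))
    (hD6 : D w₅ = w₁ * w₃ * t₂ + t₂ ^ 4)
    (hD7 : D w₆ = w₁ * w₄ * t₂ ^ 2 + w₂ * w₃ * t₁ * t₂ + t₁ ^ 5)
    : D ∘ₗ D = 0 ∧ FiniteDimensional ℚ (Cohomology 2 6 D) := by
  have h0 : ∀ i, D (tg 2 6 i) = 0 := by
    intro i
    fin_cases i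
    exacts [hD0, hD1]
  have hlin := D_smul hLeib h0
  have hsm : ∀ (i : Fin 2) (z : FGCA 2 6), D z = 0 → D (tg 2 6 i * z) = 0 := fun i z hz => by
    rw [tg_mul, hlin, hz, smul_zero]
  have hpw : ∀ (i : Fin 2) (k : ℕ) (z : FGCA 2 6), D z = 0 → D (tg 2 6 i ^ k * z) = 0 :=
    fun i k z hz => by rw [tg_pow_mul, hlin, hz, smul_zero]
  have hvm : ∀ j : Fin 6, D (vg 2 6 j) = 0 → ∀ z, D z = 0 → D (vg 2 6 j * z) = 0 :=
    fun j hj z hz => by rw [D_vg_mul hLeib, hj, hz, zero_mul, mul_zero, sub_zero]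
  have hn : ∀ z, D z = 0 → D (w₁ * w₃ * t₂ * z) = 0 := fun z hz => by
    rw [mul_assoc, mul_assoc]
    exact hvm _ hD2 _ (hvm _ hD4 _ (hsm _ _ hz))
  have hm : ∀ z, D z = 0 → D ((w₁ * w₄ * t₂ ^ 2 + w₂ * w₃ * t₁ * t₂) * z) = 0 := fun z hz => by
    simp only [add_mul, map_add, mul_assoc]
    rw [hvm _ hD2 _ (hvm _ hD5 _ (hpw _ _ _ hz)),
      hvm _ hD3 _ (hvm _ hD4 _ (hsm _ _ (hsm _ _ hz))), add_zero]
  have h1 := D_one hLeib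
  have hv : ∀ j, D (D (vg 2 6 j)) = 0 := by
    intro j
    fin_cases j
    · exact (congrArg D hD2).trans (map_zero D)
    · exact (congrArg D hD3).trans (map_zero D)
    · exact (congrArg D hD4).trans (map_zero D)
    · exact (congrArg D hD5).trans (map_zero D)
    · refine (congrArg D hD6).trans ?_
      have e1 := hn 1 h1
      have e2 := hpw 1 4 1 h1
      rw [mul_one] at e1 e2
      rw [map_add, e1, e2, add_zero]
    · refine (congrArg D hD7).trans ?_
      have e1 := hm 1 h1
      have e2 := hpw 0 5 1 h1
      rw [mul_one] at e1 e2
      rw [map_add, e1, e2, add_zero]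
  refine ⟨LinearMap.ext fun a => DD_zero hLeib hdeg h0 hv a, ?_⟩
  refine finite_cohomology hlin (fun z hz => ?_) (fun z hz => ?_)
  · refine ⟨w₆ * ((t₁ ^ 10 - t₁ ^ 5 * (w₁ * w₄ * t₂ ^ 2 + w₂ * w₃ * t₁ * t₂) +
        (w₁ * w₄ * t₂ ^ 2 + w₂ * w₃ * t₁ * t₂) ^ 2) * z), ?_⟩
    have hc : D ((t₁ ^ 10 - t₁ ^ 5 * (w₁ * w₄ * t₂ ^ 2 + w₂ * w₃ * t₁ * t₂) +
        (w₁ * w₄ * t₂ ^ 2 + w₂ * w₃ * t₁ * t₂) ^ 2) * z) = 0 := by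
      rw [add_mul, sub_mul, map_add, map_sub, hpw 0 10 z hz, mul_assoc (t₁ ^ 5),
        hpw 0 5 _ (hm z hz), sq (w₁ * w₄ * t₂ ^ 2 + w₂ * w₃ * t₁ * t₂), mul_assoc,
        hm _ (hm z hz), sub_zero, add_zero]
    rw [D_vg_mul hLeib, hc, hD7, mul_zero, sub_zero, ← mul_assoc, t1_identity, tg_pow_mul]
  · refine ⟨w₅ * ((t₂ ^ 4 - w₁ * w₃ * t₂) * z), ?_⟩
    have hc : D ((t₂ ^ 4 - w₁ * w₃ * t₂) * z) = 0 := by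
      rw [sub_mul, map_sub, hpw 1 4 z hz, hn z hz, sub_zero]
    rw [D_vg_mul hLeib, hc, hD6, mul_zero, sub_zero, ← mul_assoc, t2_identity, tg_pow_mul]

end
end

section
/- Let A = ℚ[t₁] ⊗ Λ(v₁,…,v₅) with deg v₁ = deg v₂ = deg v₃ = deg v₄ = 3 and deg v₅ = 7, and let D be the unique derivation of degree +1 on A with D t₁ = 0, D v₁ = D v₂ = D v₃ = D v₄ = 0 and D v₅ = v₁v₂t₁ + v₃v₄t₁ + t₁⁴. Then D ∘ D = 0 and dim_ℚ H(A, D) < ∞. -/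
/-!
`D` is linear over `ℚ[t₁]`, and `A` is a finite free `ℚ[t₁]`-module, so `ker D` is a finitely
generated `ℚ[t₁]`-module by Noetherianity. It therefore suffices that a power of `t₁` kills the
cohomology (`finiteDimensional_of_pow_smul`).

Put `n = v₁v₂ + v₃v₄`, so that `D v₅ = w := t₁(t₁³ + n)`. Multiplication by `v₅` is a homotopy
showing that `w` acts as zero on cohomology: `D (v₅ a) = w a` for every cocycle `a`. As `n³ = 0`,
`w (t₁⁶ - t₁³ n + n²) = t₁ (t₁⁹ + n³) = t₁¹⁰`, and the second factor commutes with `D`. Hence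
`t₁¹⁰ a = D (v₅ (t₁⁶ - t₁³ n + n²) a)` for every cocycle `a`.

For `D ∘ D = 0`: the elements `x` with `D² (x b) = x D² b` for all `b` form a subalgebra which
contains every generator, by the Leibniz rule, and `D² 1 = 0`.
-/

/- D v₅ = v₁v₂t₁ + v₃v₄t₁ + t₁⁴ on ℚ[t₁] ⊗ Λ(v₁,…,v₅), deg v = (3,3,3,3,7). -/

open scoped TensorProduct

set_option synthInstance.maxHeartbeats 1000000
set_option maxHeartbeats 1000000

noncomputable section

local notation "dv" => (![3, 3, 3, 3, 7] : Fin 5 → ℕ)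
local notation "t₁" => tg 1 5 0
local notation "v₁" => vg 1 5 0
local notation "v₂" => vg 1 5 1
local notation "v₃" => vg 1 5 2
local notation "v₄" => vg 1 5 3
local notation "v₅" => vg 1 5 4

/-! ### Linear maps commuting with left multiplications -/

/-- The subalgebra of those `x` for which left multiplication by `x` commutes with `L`. -/
def leftLin {A : Type*} [Ring A] [Algebra ℚ A] (L : A →ₗ[ℚ] A) : Subalgebra ℚ A where
  carrier := {x | ∀ b, L (x * b) = x * L b}
  mul_mem' := by
    intro x y hx hy b
    rw [mul_assoc, hx, hy, mul_assoc]
  add_mem' := by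
    intro x y hx hy b
    rw [add_mul, map_add, hx, hy, add_mul]
  algebraMap_mem' := by
    intro r b
    rw [← Algebra.smul_def, map_smul, ← Algebra.smul_def]

theorem add_cube_eq_zero {A : Type*} [Ring A] {a b : A} (ha : a * a = 0) (hb : b * b = 0)
    (hab : b * a = a * b) : (a + b) ^ 3 = 0 := by
  have h2 : (a + b) ^ 2 = a * b + a * b := by
    rw [pow_two, mul_add, add_mul, add_mul, ha, hb, hab]; abel
  have h3 : a * b * a = 0 := by rw [mul_assoc, hab, ← mul_assoc, ha, zero_mul]
  have h4 : a * b * b = 0 := by rw [mul_assoc, hb, mul_zero]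
  rw [pow_succ, h2, add_mul, mul_add, h3, h4]; simp

theorem pair_sq_s17 {A : Type*} [Ring A] {x y : A} (hx : x * x = 0) (h : x * y + y * x = 0) :
    (x * y) * (x * y) = 0 := by
  rw [mul_assoc, ← mul_assoc y, eq_neg_of_add_eq_zero_right h, neg_mul, mul_neg, ← mul_assoc,
    ← mul_assoc, hx, zero_mul, zero_mul, neg_zero]

theorem pair_commute {A : Type*} [Ring A] {x y z : A} (hx : x * z + z * x = 0)
    (hy : y * z + z * y = 0) : Commute (x * y) z := by
  change x * y * z = z * (x * y)
  rw [mul_assoc, eq_neg_of_add_eq_zero_left hy, mul_neg, ← mul_assoc,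
    eq_neg_of_add_eq_zero_left hx, neg_mul, neg_neg, mul_assoc]

theorem factor_pow_ten {A : Type*} [Ring A] {t n : A} (h : Commute t n) (hn : n ^ 3 = 0) :
    (t * (t ^ 3 + n)) * (t ^ 6 - t ^ 3 * n + n ^ 2) = t ^ 10 := by
  have h3 : n * t ^ 3 = t ^ 3 * n := (h.pow_left 3).eq.symm
  have h6 : n * t ^ 6 = t ^ 6 * n := (h.pow_left 6).eq.symm
  have key : (t ^ 3 + n) * (t ^ 6 - t ^ 3 * n + n ^ 2) = t ^ 9 := by
    have e1 : n * (t ^ 3 * n) = t ^ 3 * n ^ 2 := by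
      rw [← mul_assoc, h3, mul_assoc, pow_two]
    have e2 : n * n ^ 2 = 0 := by rw [← pow_succ', hn]
    have e3 : t ^ 3 * (t ^ 3 * n) = t ^ 6 * n := by rw [← mul_assoc, ← pow_add]
    rw [mul_add, mul_sub, add_mul, add_mul, add_mul, h6, e1, e2, e3, ← pow_add]
    abel
  rw [mul_assoc, key, ← pow_succ']

/-! ### A finiteness criterion -/

/-- If a power of the polynomial variable maps the cocycles of a finite `ℚ[X]`-module into the
coboundaries, then the cohomology is finite-dimensional over `ℚ`. -/
theorem finiteDimensional_of_pow_smul {A : Type*} [AddCommGroup A] [Module ℚ A]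
    [Module (MvPolynomial (Fin 1) ℚ) A] [IsScalarTower ℚ (MvPolynomial (Fin 1) ℚ) A]
    [Module.Finite (MvPolynomial (Fin 1) ℚ) A] (D : A →ₗ[ℚ] A)
    (hlin : ∀ (p : MvPolynomial (Fin 1) ℚ) (a : A), D (p • a) = p • D a) (N : ℕ)
    (hkill : ∀ a, D a = 0 →
      (MvPolynomial.X 0 : MvPolynomial (Fin 1) ℚ) ^ N • a ∈ LinearMap.range D) :
    FiniteDimensional ℚ ((LinearMap.ker D).map (LinearMap.range D).mkQ) := by
  classical
  let D' : A →ₗ[MvPolynomial (Fin 1) ℚ] A :=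
    { toFun := D, map_add' := D.map_add, map_smul' := hlin }
  obtain ⟨S, hS⟩ := IsNoetherian.noetherian (LinearMap.ker D')
  have hSker : ∀ s ∈ S, D s = 0 := by
    intro s hs
    have : s ∈ LinearMap.ker D' := hS ▸ Submodule.subset_span hs
    exact this
  let F : Finset A := (Finset.range N ×ˢ S).image
    fun q => (MvPolynomial.X 0 : MvPolynomial (Fin 1) ℚ) ^ q.1 • q.2
  let W : Submodule ℚ A := Submodule.span ℚ (F : Set A)
  -- Polynomial multiples of a generator: powers `X ^ k` with `k ≥ N` give coboundaries.
  have hgen : ∀ s ∈ S, ∀ p : MvPolynomial (Fin 1) ℚ, p • s ∈ LinearMap.range D ⊔ W := by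
    intro s hs p
    induction p using MvPolynomial.induction_on' with
    | monomial u c =>
      have hm : (MvPolynomial.monomial u c : MvPolynomial (Fin 1) ℚ) =
          c • (MvPolynomial.X 0) ^ (u 0) := by
        rw [MvPolynomial.X_pow_eq_monomial, MvPolynomial.smul_monomial, smul_eq_mul, mul_one]
        have hu : Finsupp.single 0 (u 0) = u := by
          refine Finsupp.ext fun i => ?_
          rw [Subsingleton.elim i 0, Finsupp.single_eq_same]
        rw [hu]
      rw [hm, smul_assoc]
      refine Submodule.smul_mem _ _ ?_
      by_cases hk : u 0 < N
      · refine Submodule.mem_sup_right (Submodule.subset_span ?_)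
        exact Finset.mem_coe.2 (Finset.mem_image.2 ⟨(u 0, s),
          Finset.mem_product.2 ⟨Finset.mem_range.2 hk, hs⟩, rfl⟩)
      · refine Submodule.mem_sup_left ?_
        obtain ⟨k, hk'⟩ := Nat.exists_eq_add_of_le (not_lt.1 hk)
        rw [hk', pow_add, mul_smul]
        apply hkill
        rw [hlin, hSker s hs, smul_zero]
    | add p q hp hq => rw [add_smul]; exact Submodule.add_mem _ hp hq
  have hall : ∀ a ∈ Submodule.span (MvPolynomial (Fin 1) ℚ) (S : Set A),
      ∀ p : MvPolynomial (Fin 1) ℚ, p • a ∈ LinearMap.range D ⊔ W := by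
    intro a ha
    induction ha using Submodule.span_induction with
    | mem s hs => exact hgen s hs
    | zero => intro p; rw [smul_zero]; exact Submodule.zero_mem _
    | add x y _ _ hx hy => intro p; rw [smul_add]; exact Submodule.add_mem _ (hx p) (hy p)
    | smul r x _ hx => intro p; rw [← mul_smul]; exact hx _
  have hle : LinearMap.ker D ≤ LinearMap.range D ⊔ W := by
    intro a ha
    have h := hall a (by rw [hS]; exact ha) 1
    rwa [one_smul] at h
  have hmap : (LinearMap.ker D).map (LinearMap.range D).mkQ ≤ W.map (LinearMap.range D).mkQ := by
    refine (Submodule.map_mono hle).trans ?_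
    rw [Submodule.map_sup, Submodule.mkQ_map_self, bot_sup_eq]
  have : FiniteDimensional ℚ W := FiniteDimensional.span_finset ℚ F
  have : FiniteDimensional ℚ (W.map (LinearMap.range D).mkQ) := inferInstance
  exact Submodule.finiteDimensional_of_le hmap

/-! ### The algebra `FGCA` -/

theorem finite_FGCA_s17 (r n : ℕ) : Module.Finite (MvPolynomial (Fin r) ℚ) (FGCA r n) := by
  have : Module.Finite ℚ (ExteriorAlgebra ℚ (Fin n → ℚ)) :=
    Module.Finite.of_basis (Pi.basisFun ℚ (Fin n)).ExteriorAlgebra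
  exact Module.Finite.base_change ℚ (MvPolynomial (Fin r) ℚ) (ExteriorAlgebra ℚ (Fin n → ℚ))

theorem eq_top_of_gens (r n : ℕ) (S : Subalgebra ℚ (FGCA r n)) (ht : ∀ i, tg r n i ∈ S)
    (hv : ∀ j, vg r n j ∈ S) : S = ⊤ := by
  have hl : ∀ p : MvPolynomial (Fin r) ℚ,
      (p ⊗ₜ[ℚ] (1 : ExteriorAlgebra ℚ (Fin n → ℚ)) : FGCA r n) ∈ S := by
    intro p
    have h : (⊤ : Subalgebra ℚ (MvPolynomial (Fin r) ℚ)) ≤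
        S.comap Algebra.TensorProduct.includeLeft := by
      rw [← MvPolynomial.adjoin_range_X, Algebra.adjoin_le_iff]
      rintro _ ⟨i, rfl⟩
      exact ht i
    exact h (Algebra.mem_top : p ∈ _)
  have hr : ∀ e : ExteriorAlgebra ℚ (Fin n → ℚ),
      ((1 : MvPolynomial (Fin r) ℚ) ⊗ₜ[ℚ] e : FGCA r n) ∈ S := by
    intro e
    change e ∈ S.comap
      (Algebra.TensorProduct.includeRight :
        ExteriorAlgebra ℚ (Fin n → ℚ) →ₐ[ℚ] FGCA r n)
    induction e using ExteriorAlgebra.induction with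
    | algebraMap c => exact Subalgebra.algebraMap_mem _ c
    | ι x =>
      rw [pi_eq_sum_univ' x, map_sum]
      refine Subalgebra.sum_mem _ fun j _ => ?_
      rw [map_smul]
      refine Subalgebra.smul_mem _ ?_ _
      exact hv j
    | mul a b ha hb => exact Subalgebra.mul_mem _ ha hb
    | add a b ha hb => exact Subalgebra.add_mem _ ha hb
  refine Algebra.eq_top_iff.2 fun x => ?_
  induction x using TensorProduct.induction_on with
  | zero => exact Subalgebra.zero_mem _
  | tmul p e =>
    have h : (p ⊗ₜ[ℚ] e : FGCA r n) = (p ⊗ₜ 1) * (1 ⊗ₜ e) := by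
      rw [Algebra.TensorProduct.tmul_mul_tmul, mul_one, one_mul]
    rw [h]
    exact Subalgebra.mul_mem _ (hl p) (hr e)
  | add x y hx hy => exact Subalgebra.add_mem _ hx hy

theorem one_mem_homog (r n : ℕ) (d : Fin n → ℕ) : (1 : FGCA r n) ∈ homog r n d 0 := by
  refine Submodule.subset_span ⟨0, ∅, ?_, ?_⟩
  · simp [gdeg]
  · simp [gmon, Algebra.TensorProduct.one_def]

theorem tg_mem_homog (r n : ℕ) (d : Fin n → ℕ) (i : Fin r) : tg r n i ∈ homog r n d 2 := by
  refine Submodule.subset_span ⟨Finsupp.single i 1, ∅, ?_, ?_⟩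
  · simp [gdeg]
  · simp [gmon, tg, MvPolynomial.X]

theorem vg_mem_homog (r n : ℕ) (d : Fin n → ℕ) (j : Fin n) :
    vg r n j ∈ homog r n d (d j) := by
  refine Submodule.subset_span ⟨0, {j}, ?_, ?_⟩
  · simp [gdeg]
  · simp [gmon, vg]

theorem tg_commute (r n : ℕ) (i : Fin r) (x : FGCA r n) : Commute (tg r n i) x := by
  have h : tg r n i = algebraMap (MvPolynomial (Fin r) ℚ) (FGCA r n) (MvPolynomial.X i) := rfl
  rw [h]
  exact Algebra.commutes _ _

theorem vg_mul_self (r n : ℕ) (j : Fin n) : vg r n j * vg r n j = 0 := by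
  rw [vg, Algebra.TensorProduct.tmul_mul_tmul, ExteriorAlgebra.ι_sq_zero, TensorProduct.tmul_zero]

theorem vg_add_swap (r n : ℕ) (i j : Fin n) :
    vg r n i * vg r n j + vg r n j * vg r n i = 0 := by
  rw [vg, vg, Algebra.TensorProduct.tmul_mul_tmul, Algebra.TensorProduct.tmul_mul_tmul,
    ← TensorProduct.tmul_add, ExteriorAlgebra.ι_add_mul_swap, TensorProduct.tmul_zero]

theorem vg_pair_sq (r n : ℕ) (i j : Fin n) :
    (vg r n i * vg r n j) * (vg r n i * vg r n j) = 0 :=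
  pair_sq_s17 (vg_mul_self r n i) (vg_add_swap r n i j)

theorem vg_pair_comm (r n : ℕ) (i j k l : Fin n) :
    (vg r n k * vg r n l) * (vg r n i * vg r n j) =
      (vg r n i * vg r n j) * (vg r n k * vg r n l) := by
  have h : ∀ m : Fin n, Commute (vg r n k * vg r n l) (vg r n m) := fun m =>
    pair_commute (vg_add_swap r n k m) (vg_add_swap r n l m)
  exact ((h i).mul_right (h j)).eq

/-! ### The differential -/

theorem stmt_17 (D : FGCA 1 5 →ₗ[ℚ] FGCA 1 5)
    (hLeib : IsLeibniz 1 5 dv D)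
    (hdeg : RaisesDegByOne 1 5 dv D)
    (hD0 : D t₁ = (0 : FGCA 1 5))
    (hD1 : D v₁ = (0 : FGCA 1 5))
    (hD2 : D v₂ = (0 : FGCA 1 5))
    (hD3 : D v₃ = (0 : FGCA 1 5))
    (hD4 : D v₄ = (0 : FGCA 1 5))
    (hD5 : D v₅ = v₁ * v₂ * t₁ + v₃ * v₄ * t₁ + t₁ ^ 4)
    : D ∘ₗ D = 0 ∧ FiniteDimensional ℚ (Cohomology 1 5 D) := by
  have hD1' : D 1 = 0 := by
    have h := hLeib 0 1 1 (one_mem_homog 1 5 _)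
    simpa using h
  have ht : ∀ b, D (t₁ * b) = t₁ * D b := by
    intro b
    have h := hLeib 2 t₁ b (tg_mem_homog 1 5 _ 0)
    rw [h, hD0, zero_mul, zero_add]
    norm_num
  have hv : ∀ j, ∀ b, D (vg 1 5 j * b) = D (vg 1 5 j) * b + (-1 : ℚ) • (vg 1 5 j * D b) := by
    intro j b
    have h := hLeib (dv j) (vg 1 5 j) b (vg_mem_homog 1 5 _ j)
    -- all degrees of the exterior generators are odd
    have hs : (-1 : ℚ) ^ ((dv : Fin 5 → ℕ) j) = -1 := by
      fin_cases j <;> norm_num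
    rw [h, hs]
  have hpair : ∀ i j, D (vg 1 5 i) = 0 → D (vg 1 5 j) = 0 →
      vg 1 5 i * vg 1 5 j ∈ leftLin D := by
    intro i j hi hj b
    rw [mul_assoc, hv, hi, hv, hj]
    rw [zero_mul, zero_mul, zero_add, zero_add, mul_smul_comm, smul_smul, mul_assoc]
    norm_num
  have htm : t₁ ∈ leftLin D := ht
  set n : FGCA 1 5 := v₁ * v₂ + v₃ * v₄ with hn
  have hnm : n ∈ leftLin D := Subalgebra.add_mem _ (hpair 0 1 hD1 hD2) (hpair 2 3 hD3 hD4)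
  have hn3 : n ^ 3 = 0 :=
    add_cube_eq_zero (vg_pair_sq 1 5 0 1) (vg_pair_sq 1 5 2 3) (vg_pair_comm 1 5 0 1 2 3)
  have hw : D v₅ = t₁ * (t₁ ^ 3 + n) := by
    rw [hD5, ← add_mul, ← hn, mul_add, ← pow_succ', (tg_commute 1 5 0 n).eq, add_comm]
  have hwm : D v₅ ∈ leftLin D := by
    rw [hw]
    exact Subalgebra.mul_mem _ htm (Subalgebra.add_mem _ (Subalgebra.pow_mem _ htm 3) hnm)
  have hqm : t₁ ^ 6 - t₁ ^ 3 * n + n ^ 2 ∈ leftLin D :=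
    Subalgebra.add_mem _ (Subalgebra.sub_mem _ (Subalgebra.pow_mem _ htm 6)
      (Subalgebra.mul_mem _ (Subalgebra.pow_mem _ htm 3) hnm)) (Subalgebra.pow_mem _ hnm 2)
  refine ⟨?_, ?_⟩
  · have hvm : ∀ j, D (vg 1 5 j) ∈ leftLin D := by
      intro j
      fin_cases j
      · exact hD1 ▸ Subalgebra.zero_mem _
      · exact hD2 ▸ Subalgebra.zero_mem _
      · exact hD3 ▸ Subalgebra.zero_mem _
      · exact hD4 ▸ Subalgebra.zero_mem _
      · exact hwm
    have htop : leftLin (D ∘ₗ D) = ⊤ := by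
      refine eq_top_of_gens 1 5 _ ?_ ?_
      · intro i b
        rw [Subsingleton.elim i 0, LinearMap.comp_apply, ht, ht, LinearMap.comp_apply]
      · intro j b
        rw [LinearMap.comp_apply, LinearMap.comp_apply, hv, map_add, map_smul, hvm j b, hv j (D b)]
        module
    refine LinearMap.ext fun x => ?_
    have hx : x ∈ leftLin (D ∘ₗ D) := htop ▸ Algebra.mem_top
    have h := hx 1
    rw [mul_one, LinearMap.comp_apply D D 1, hD1', map_zero, mul_zero] at h
    exact h
  · have := finite_FGCA_s17 1 5
    have hsmul : ∀ (p : MvPolynomial (Fin 1) ℚ) (a : FGCA 1 5),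
        p • a = algebraMap (MvPolynomial (Fin 1) ℚ) (FGCA 1 5) p * a :=
      fun p a => Algebra.smul_def p a
    have hX : algebraMap (MvPolynomial (Fin 1) ℚ) (FGCA 1 5) (MvPolynomial.X 0) = t₁ := rfl
    refine finiteDimensional_of_pow_smul D ?_ 10 ?_
    · have hp : (⊤ : Subalgebra ℚ (MvPolynomial (Fin 1) ℚ)) ≤
          (leftLin D).comap (IsScalarTower.toAlgHom ℚ (MvPolynomial (Fin 1) ℚ) (FGCA 1 5)) := by
        rw [← MvPolynomial.adjoin_range_X, Algebra.adjoin_le_iff]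
        rintro _ ⟨i, rfl⟩
        rw [Subsingleton.elim i 0]
        exact htm
      intro p a
      rw [hsmul, hsmul]
      exact hp (Algebra.mem_top : p ∈ _) a
    · intro a ha
      refine ⟨v₅ * ((t₁ ^ 6 - t₁ ^ 3 * n + n ^ 2) * a), ?_⟩
      rw [hsmul, map_pow, hX, hv, hqm a, ha, mul_zero, mul_zero, smul_zero, add_zero, ← mul_assoc, hw,
        factor_pow_ten (tg_commute 1 5 0 n) hn3]

end
end
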